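/- arXiv:0903.4090 — 3 statements merged into one kernel-verified Lean document; each statement's English description precedes it below -/
import Mathlib

section
/- Let (X,d) be a compact metric space, f : X → X a homeomorphism, and H ⊆ X a compact set with f(H) = H which is Lyapunov stable for f. Then for every x ∈ H the unstable set W^u(x) is contained in H. -/
/-!
Suppose `y ∈ W^u(x)` lies outside `H`. Stability applied to the open set `{y}ᶜ ⊇ H` gives an open
`V ⊇ H` whose forward orbit misses `y`. By compactness `V` contains a uniform `δ`-neighbourhood
of `H`; since the backward orbit of `x` stays in `H` and that of `y` is asymptotic to it,
`f⁻ⁿ y ∈ V` for some `n`. Then `y = fⁿ (f⁻ⁿ y)` is in the forward orbit of `V`, a contradiction.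
-/

/-- `H` is Lyapunov stable for `f`: for every open `U ⊇ H` there is an open `V ⊇ H`
with `f^n (closure V) ⊆ U` for all `n ≥ 0`. -/
def LyapunovStable {X : Type*} [TopologicalSpace X] (f : X → X) (H : Set X) : Prop :=
  ∀ U : Set X, IsOpen U → H ⊆ U →
    ∃ V : Set X, IsOpen V ∧ H ⊆ V ∧ ∀ n : ℕ, f^[n] '' closure V ⊆ U

/-- The unstable set of `z`: points whose backward orbit approaches that of `z`. -/
def unstableSet {X : Type*} [MetricSpace X] (f : X ≃ₜ X) (z : X) : Set X :=
  {y | Filter.Tendsto (fun n : ℕ => dist ((⇑f.symm)^[n] y) ((⇑f.symm)^[n] z))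
        Filter.atTop (nhds 0)}

theorem unstable_set_subset_of_lyapunovStable
    {X : Type*} [MetricSpace X] [CompactSpace X] (f : X ≃ₜ X)
    (H : Set X) (hHcomp : IsCompact H) (hHinv : ⇑f '' H = H)
    (hLS : LyapunovStable (⇑f) H) :
    ∀ x ∈ H, unstableSet f x ⊆ H := by
  intro x hx y hy
  by_contra hyH
  obtain ⟨V, hVo, hHV, hV⟩ := hLS {y}ᶜ isOpen_compl_singleton
    (fun z hz hzy => hyH (Set.mem_singleton_iff.1 hzy ▸ hz))
  obtain ⟨δ, hδ, hδV⟩ := hHcomp.exists_thickening_subset_open hVo hHV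
  have hback : ∀ n : ℕ, (⇑f.symm)^[n] x ∈ H := by
    have hmaps : Set.MapsTo f.symm H H := by
      intro z hz
      rw [← hHinv] at hz
      obtain ⟨w, hw, rfl⟩ := hz
      simpa using hw
    exact fun n => hmaps.iterate n hx
  have hy' : Filter.Tendsto (fun n : ℕ => dist ((⇑f.symm)^[n] y) ((⇑f.symm)^[n] x))
      Filter.atTop (nhds 0) := hy
  obtain ⟨n, hn⟩ := (hy'.eventually (gt_mem_nhds hδ)).exists
  have hmem : (⇑f.symm)^[n] y ∈ V :=
    hδV (Metric.mem_thickening_iff.2 ⟨_, hback n, hn⟩)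
  have hinv : (⇑f)^[n] ((⇑f.symm)^[n] y) = y :=
    Function.LeftInverse.iterate (fun z => f.apply_symm_apply z) n y
  exact hV n ⟨_, subset_closure hmem, hinv⟩ rfl
end

section
/- Let (X,d) be a compact metric space, f : X → X a homeomorphism, and H ⊆ X a compact set with f(H) = H which is Lyapunov stable for f. Let z ∈ H, let p ∈ X be a periodic point of f, and suppose that W^u(z) ∩ W^s(p) ≠ ∅. Then p ∈ H, and hence O(p) ⊆ H. -/
/-- The stable set of `z`: points whose forward orbit approaches that of `z`. -/
def stableSet {X : Type*} [MetricSpace X] (f : X ≃ₜ X) (z : X) : Set X :=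
  {y | Filter.Tendsto (fun n : ℕ => dist ((⇑f)^[n] y) ((⇑f)^[n] z))
        Filter.atTop (nhds 0)}

/-- The unstable set of a point of a compact Lyapunov stable invariant set `H` lies in `H`. If
`y ∉ H`, stability with respect to the open set `{y}ᶜ ⊇ H` gives a neighbourhood `V` of `H` whose
forward orbit misses `y`; but some backward iterate of `y` lies in `V`. -/
theorem unstableSet_subset_of_lyapunovStable {X : Type*} [MetricSpace X] (f : X ≃ₜ X)
    {H : Set X} (hHcomp : IsCompact H) (hHinv : ⇑f '' H = H) (hLS : LyapunovStable (⇑f) H)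
    {z : X} (hz : z ∈ H) : unstableSet f z ⊆ H := by
  intro y hy
  by_contra hyH
  obtain ⟨V, hVo, hHV, hV⟩ := hLS {y}ᶜ isOpen_compl_singleton
    (fun x hx hxy => hyH (Set.mem_singleton_iff.1 hxy ▸ hx))
  obtain ⟨δ, hδ, hthick⟩ := hHcomp.exists_thickening_subset_open hVo hHV
  have hmaps : Set.MapsTo (⇑f.symm) H H := by
    intro x hx
    rw [← hHinv] at hx
    obtain ⟨w, hw, rfl⟩ := hx
    simpa using hw
  obtain ⟨n, hn⟩ := (Filter.Tendsto.eventually_lt_const hδ hy).exists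
  have hmem : (⇑f.symm)^[n] y ∈ V :=
    hthick (Metric.mem_thickening_iff.2 ⟨_, hmaps.iterate n hz, hn⟩)
  have hback : (⇑f)^[n] ((⇑f.symm)^[n] y) = y :=
    Function.LeftInverse.iterate f.apply_symm_apply n y
  exact hV n ⟨_, subset_closure hmem, hback⟩ rfl

theorem periodic_mem_of_unstable_inter_stable
    {X : Type*} [MetricSpace X] [CompactSpace X] (f : X ≃ₜ X)
    (H : Set X) (hHcomp : IsCompact H) (hHinv : ⇑f '' H = H)
    (hLS : LyapunovStable (⇑f) H)
    (z : X) (hz : z ∈ H)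
    (p : X) (hp : ∃ k : ℕ, 1 ≤ k ∧ (⇑f)^[k] p = p)
    (hint : (unstableSet f z ∩ stableSet f p).Nonempty) :
    p ∈ H ∧ ∀ n : ℕ, (⇑f)^[n] p ∈ H := by
  obtain ⟨y, hyu, hys⟩ := hint
  obtain ⟨k, hk, hkp⟩ := hp
  have hyH : y ∈ H := unstableSet_subset_of_lyapunovStable f hHcomp hHinv hLS hz hyu
  have hmaps : Set.MapsTo (⇑f) H H := Set.mapsTo_iff_image_subset.2 hHinv.subset
  have hper : ∀ n : ℕ, (⇑f)^[k * n] p = p := fun n => by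
    rw [Function.iterate_mul]
    exact Function.iterate_fixed hkp n
  have hlim : Filter.Tendsto (fun n : ℕ => (⇑f)^[k * n] y) Filter.atTop (nhds p) := by
    rw [tendsto_iff_dist_tendsto_zero]
    have hsub : Filter.Tendsto (fun n : ℕ => k * n) Filter.atTop Filter.atTop :=
      Filter.tendsto_id.const_mul_atTop' hk
    simpa only [Function.comp_def, hper] using Filter.Tendsto.comp hys hsub
  have hpH : p ∈ H := hHcomp.isClosed.mem_of_tendsto hlim
    (Filter.Eventually.of_forall fun n => hmaps.iterate (k * n) hyH)
  exact ⟨hpH, fun n => hmaps.iterate n hpH⟩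
end

section
/- Let (X,d) be a compact metric space and f : X → X a homeomorphism. Let p and q be periodic points of f with O(p) ∩ O(q) = ∅, and let x ∈ X \ O(p) be a point such that d(f^n(x), f^n(p)) → 0 as n → +∞ and every accumulation point of the backward orbit (f^{−n}(x))_{n ≥ 1} lies in O(q). Then there exists an open set U containing O(p) such that: (i) U ∩ O(q) = ∅; (ii) U ∩ {f^{−n}(x) : n ≥ 1} = ∅; (iii) for all integers 0 ≤ n ≤ m, if f^n(x) ∈ U then f^m(x) ∈ U (once the forward orbit of x enters U it stays in U). -/
/-!
No point of `O(p)` is an accumulation point of the backward orbit of `x`, so by compactness some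
open `W ⊇ O(p)` misses all but finitely many points `f⁻ⁿ x`. Removing from `W` these finitely many
points and the finite set `O(q)` gives an open `V ⊇ O(p)`; here one uses that `O(p)` is fully
invariant and `x ∉ O(p)`. The forward orbit of `x` converges to `O(p)`, hence lies in `V` from some
time `N` on, and `U = V \ {x, f x, …, f^(N-1) x}` works: an orbit point in `U` has time at least
`N`, and the later orbit never returns to one of the removed points because `x` is not periodic
(a periodic point asymptotic to the periodic point `p` would equal `p`).
-/

/-- The (finite) orbit of a periodic point: for periodic `p` the forward orbit
`{f^n p : n ∈ ℕ}` coincides with the full orbit. -/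
def orbitOf {X : Type*} [TopologicalSpace X] (f : X ≃ₜ X) (p : X) : Set X :=
  {y | ∃ n : ℕ, (⇑f)^[n] p = y}

open Filter Topology Set

lemma finite_orbitOf {X : Type*} [TopologicalSpace X] (f : X ≃ₜ X) {p : X}
    (hp : ∃ k : ℕ, 1 ≤ k ∧ (⇑f)^[k] p = p) : (orbitOf f p).Finite := by
  obtain ⟨k, hk, hkp⟩ := hp
  refine ((Set.finite_lt_nat k).image (fun n => (⇑f)^[n] p)).subset ?_
  rintro y ⟨n, rfl⟩
  exact ⟨n % k, Nat.mod_lt _ hk, Function.IsPeriodicPt.iterate_mod_apply hkp n⟩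

lemma mem_orbitOf_of_iterate_mem {X : Type*} [TopologicalSpace X] (f : X ≃ₜ X) {p x : X}
    (hp : ∃ k : ℕ, 1 ≤ k ∧ (⇑f)^[k] p = p) {n : ℕ} (h : (⇑f)^[n] x ∈ orbitOf f p) :
    x ∈ orbitOf f p := by
  obtain ⟨k, hk, hkp⟩ := hp
  obtain ⟨m, hm⟩ := h
  obtain ⟨k, rfl⟩ := Nat.exists_eq_add_of_le' hk
  refine ⟨m + n * k, f.injective.iterate n ?_⟩
  have hper : (⇑f)^[n * (k + 1)] p = p := Function.IsPeriodicPt.const_mul hkp n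
  rw [← Function.iterate_add_apply, show n + (m + n * k) = m + n * (k + 1) by ring,
    Function.iterate_add_apply, hper, hm]

lemma mem_orbitOf_of_symm_iterate_mem {X : Type*} [TopologicalSpace X] (f : X ≃ₜ X) {p x : X}
    {n : ℕ} (h : (⇑f.symm)^[n] x ∈ orbitOf f p) : x ∈ orbitOf f p := by
  obtain ⟨m, hm⟩ := h
  have hinv : Function.LeftInverse (⇑f)^[n] (⇑f.symm)^[n] :=
    Function.LeftInverse.iterate f.apply_symm_apply n
  exact ⟨n + m, by rw [Function.iterate_add_apply, hm, hinv x]⟩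

/-- Two periodic points that are forward asymptotic coincide: along common multiples of their
periods the distance is constant. -/
lemma eq_of_periodic_of_asymptotic {X : Type*} [MetricSpace X] (f : X ≃ₜ X) {p x : X}
    {k r : ℕ} (hk : 1 ≤ k) (hr : 1 ≤ r) (hkp : (⇑f)^[k] p = p) (hrx : (⇑f)^[r] x = x)
    (hconv : Tendsto (fun n : ℕ => dist ((⇑f)^[n] x) ((⇑f)^[n] p)) atTop (𝓝 0)) : x = p := by
  have hsub : Tendsto (fun n : ℕ => n * (r * k)) atTop atTop :=
    tendsto_id.atTop_mul_const' (Nat.mul_pos hr hk)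
  have hconst : (fun n : ℕ => dist ((⇑f)^[n * (r * k)] x) ((⇑f)^[n * (r * k)] p))
      = fun _ => dist x p := by
    funext n
    have hx : (⇑f)^[n * (r * k)] x = x :=
      Function.IsPeriodicPt.const_mul (Function.IsPeriodicPt.mul_const hrx k) n
    have hp : (⇑f)^[n * (r * k)] p = p :=
      Function.IsPeriodicPt.const_mul (Function.IsPeriodicPt.const_mul hkp r) n
    rw [hx, hp]
  have hlim := hconv.comp hsub
  simp only [Function.comp_def, hconst] at hlim
  exact dist_eq_zero.1 (tendsto_nhds_unique tendsto_const_nhds hlim)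

theorem exists_trapping_neighborhood
    {X : Type*} [MetricSpace X] [CompactSpace X] (f : X ≃ₜ X)
    (p q x : X)
    (hp : ∃ k : ℕ, 1 ≤ k ∧ (⇑f)^[k] p = p)
    (hq : ∃ k : ℕ, 1 ≤ k ∧ (⇑f)^[k] q = q)
    (hdisj : orbitOf f p ∩ orbitOf f q = ∅)
    (hxp : x ∉ orbitOf f p)
    (hconv : Filter.Tendsto (fun n : ℕ => dist ((⇑f)^[n] x) ((⇑f)^[n] p))
      Filter.atTop (nhds 0))
    (hacc : ∀ y : X, MapClusterPt y Filter.atTop (fun n : ℕ => (⇑f.symm)^[n + 1] x) →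
      y ∈ orbitOf f q) :
    ∃ U : Set X, IsOpen U ∧ orbitOf f p ⊆ U ∧
      U ∩ orbitOf f q = ∅ ∧
      (∀ n : ℕ, 1 ≤ n → (⇑f.symm)^[n] x ∉ U) ∧
      (∀ n m : ℕ, n ≤ m → (⇑f)^[n] x ∈ U → (⇑f)^[m] x ∈ U) := by
  have hcpt : IsCompact (orbitOf f p) := (finite_orbitOf f hp).isCompact
  have hsep : Disjoint (𝓝ˢ (orbitOf f p))
      (map (fun n : ℕ => (⇑f.symm)^[n + 1] x) atTop) := by
    rw [hcpt.disjoint_nhdsSet_left]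
    intro y hy
    by_contra hnot
    have hyq : y ∈ orbitOf f q := hacc y (neBot_iff.2 fun h => hnot (disjoint_iff.2 h))
    exact Set.notMem_empty y (hdisj ▸ ⟨hy, hyq⟩)
  obtain ⟨W, ⟨hWo, hpW⟩, hW⟩ := ((hasBasis_nhdsSet _).disjoint_iff_left).1 hsep
  obtain ⟨M, hM⟩ := eventually_atTop.1 (mem_map.1 hW)
  set B : Set X := (fun n : ℕ => (⇑f.symm)^[n + 1] x) '' {n | n < M} with hB
  have hBfin : B.Finite := (Set.finite_lt_nat M).image _
  set V : Set X := W \ (orbitOf f q ∪ B) with hV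
  have hVo : IsOpen V := hWo.sdiff ((finite_orbitOf f hq).union hBfin).isClosed
  have hpV : orbitOf f p ⊆ V := by
    intro y hy
    refine ⟨hpW hy, ?_⟩
    rintro (hyq | ⟨n, -, rfl⟩)
    · exact Set.notMem_empty y (hdisj ▸ ⟨hy, hyq⟩)
    · exact hxp (mem_orbitOf_of_symm_iterate_mem f hy)
  obtain ⟨ε, hε, hεV⟩ := hcpt.exists_thickening_subset_open hVo hpV
  obtain ⟨N, hN⟩ := eventually_atTop.1 (hconv.eventually_lt_const hε)
  have hNV : ∀ m, N ≤ m → (⇑f)^[m] x ∈ V := fun m hm =>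
    hεV (Metric.mem_thickening_iff.2 ⟨_, ⟨m, rfl⟩, hN m hm⟩)
  set A : Set X := (fun n : ℕ => (⇑f)^[n] x) '' {n | n < N} with hA
  have hAfin : A.Finite := (Set.finite_lt_nat N).image _
  refine ⟨V \ A, hVo.sdiff hAfin.isClosed, ?_, ?_, ?_, ?_⟩
  · intro y hy
    refine ⟨hpV hy, ?_⟩
    rintro ⟨n, -, rfl⟩
    exact hxp (mem_orbitOf_of_iterate_mem f hp hy)
  · ext y
    simp only [mem_inter_iff, mem_empty_iff_false, iff_false]
    exact fun h => h.1.1.2 (Or.inl h.2)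
  · intro n hn hnU
    obtain ⟨n, rfl⟩ := Nat.exists_eq_add_of_le' hn
    rcases lt_or_ge n M with h | h
    · exact hnU.1.2 (Or.inr ⟨n, h, rfl⟩)
    · exact hM n h hnU.1.1
  · intro n m hnm hnU
    have hNn : N ≤ n := by
      by_contra! h
      exact hnU.2 ⟨n, h, rfl⟩
    refine ⟨hNV m (hNn.trans hnm), ?_⟩
    rintro ⟨j, hj, hjm⟩
    have hjm' : j < m := lt_of_lt_of_le hj (hNn.trans hnm)
    -- A repetition `f^j x = f^m x` makes `x` periodic of period `m - j`, since `f` is injective.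
    have hper : (⇑f)^[m - j] x = x := by
      refine f.injective.iterate j ?_
      rw [← Function.iterate_add_apply, Nat.add_sub_cancel' hjm'.le]
      exact hjm.symm
    obtain ⟨k, hk, hkp⟩ := hp
    exact hxp ⟨0, (eq_of_periodic_of_asymptotic f hk (by omega) hkp hper hconv).symm⟩
end
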